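/- For every ψ ∈ C_c^∞(ℝ² \ {0}) and every θ ∈ S¹, one has T(Δψ)(0,θ) = (∂_θ² + 1) [T(|x|^{−2}ψ)(0,θ)], where Δ = ∂_{x₁}² + ∂_{x₂}² is the Laplacian on ℝ², |x|^{−2}ψ denotes the function x ↦ |x|^{−2}ψ(x), and ∂_θ² is the second derivative in θ of the smooth function θ ↦ T(|x|^{−2}ψ)(0,θ) on S¹. -/

import Mathlib

open MeasureTheory Real

noncomputable section

/-- Directional derivative of a function on `ℝ²` in the direction `v`. -/
def pd (v : ℝ × ℝ) (ψ : ℝ × ℝ → ℝ) : ℝ × ℝ → ℝ := fun p => fderiv ℝ ψ p v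

/-- The Laplacian `Δ = ∂_{x₁}² + ∂_{x₂}²` on `ℝ²`. -/
def lap (ψ : ℝ × ℝ → ℝ) : ℝ × ℝ → ℝ := fun p =>
  pd (1, 0) (pd (1, 0) ψ) p + pd (0, 1) (pd (0, 1) ψ) p

/-- The X-ray transform `Tψ(s,θ)`. -/
def xray (ψ : ℝ × ℝ → ℝ) (s θ : ℝ) : ℝ :=
  ∫ t : ℝ, ψ (t * Real.cos θ - s * Real.sin θ, t * Real.sin θ + s * Real.cos θ)

/-- The function `x ↦ |x|⁻² ψ(x)` on `ℝ²`. -/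
def invSq (ψ : ℝ × ℝ → ℝ) : ℝ × ℝ → ℝ := fun p => (p.1 ^ 2 + p.2 ^ 2)⁻¹ * ψ p

/-- The infinitesimal rotation `x₁ ∂_{x₂} - x₂ ∂_{x₁}`. -/
def rotDeriv (g : ℝ × ℝ → ℝ) : ℝ × ℝ → ℝ := fun p =>
  -p.2 * pd (1, 0) g p + p.1 * pd (0, 1) g p

/-- The Euler operator `x₁ ∂_{x₁} + x₂ ∂_{x₂}`. -/
def eulerDeriv (g : ℝ × ℝ → ℝ) : ℝ × ℝ → ℝ := fun p =>
  p.1 * pd (1, 0) g p + p.2 * pd (0, 1) g p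

theorem fderiv_apply_eq_pd (g : ℝ × ℝ → ℝ) (p v : ℝ × ℝ) :
    fderiv ℝ g p v = v.1 * pd (1, 0) g p + v.2 * pd (0, 1) g p := by
  have hv : v = v.1 • ((1, 0) : ℝ × ℝ) + v.2 • ((0, 1) : ℝ × ℝ) := by ext <;> simp
  conv_lhs => rw [hv]
  simp only [map_add, map_smul, smul_eq_mul, pd]

theorem ContDiff.pd {g : ℝ × ℝ → ℝ} (hg : ContDiff ℝ (⊤ : ℕ∞) g) (v : ℝ × ℝ) :
    ContDiff ℝ (⊤ : ℕ∞) (pd v g) :=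
  (hg.fderiv_right (m := (⊤ : ℕ∞)) (by norm_cast)).clm_apply contDiff_const

theorem ContDiff.rotDeriv {g : ℝ × ℝ → ℝ} (hg : ContDiff ℝ (⊤ : ℕ∞) g) :
    ContDiff ℝ (⊤ : ℕ∞) (rotDeriv g) :=
  (contDiff_snd.neg.mul (hg.pd _)).add (contDiff_fst.mul (hg.pd _))

theorem ContDiff.eulerDeriv {g : ℝ × ℝ → ℝ} (hg : ContDiff ℝ (⊤ : ℕ∞) g) :
    ContDiff ℝ (⊤ : ℕ∞) (eulerDeriv g) :=
  (contDiff_fst.mul (hg.pd _)).add (contDiff_snd.mul (hg.pd _))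

theorem HasCompactSupport.pd {g : ℝ × ℝ → ℝ} (hg : HasCompactSupport g) (v : ℝ × ℝ) :
    HasCompactSupport (pd v g) :=
  hg.fderiv_apply ℝ v

theorem HasCompactSupport.rotDeriv {g : ℝ × ℝ → ℝ} (hg : HasCompactSupport g) :
    HasCompactSupport (rotDeriv g) :=
  (hg.pd (1, 0)).mul_left.add (hg.pd (0, 1)).mul_left

theorem HasCompactSupport.eulerDeriv {g : ℝ × ℝ → ℝ} (hg : HasCompactSupport g) :
    HasCompactSupport (eulerDeriv g) :=
  (hg.pd (1, 0)).mul_left.add (hg.pd (0, 1)).mul_left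

theorem pd_add {f g : ℝ × ℝ → ℝ} (hf : Differentiable ℝ f) (hg : Differentiable ℝ g)
    (v p : ℝ × ℝ) : pd v (fun q => f q + g q) p = pd v f p + pd v g p := by
  simp only [pd, fderiv_fun_add (hf p) (hg p), add_apply]

theorem pd_mul {f g : ℝ × ℝ → ℝ} (hf : Differentiable ℝ f) (hg : Differentiable ℝ g)
    (v p : ℝ × ℝ) : pd v (fun q => f q * g q) p = f p * pd v g p + g p * pd v f p := by
  simp only [pd, fderiv_fun_mul (hf p) (hg p), add_apply,
    smul_apply, smul_eq_mul]

theorem pd_fst (v p : ℝ × ℝ) : pd v (fun q => q.1) p = v.1 := by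
  simp [pd, fderiv_fst]

theorem pd_snd (v p : ℝ × ℝ) : pd v (fun q => q.2) p = v.2 := by
  simp [pd, fderiv_snd]

theorem pd_neg_snd (v p : ℝ × ℝ) : pd v (fun q => -q.2) p = -v.2 := by
  simp [pd, fderiv_fun_neg, fderiv_snd]

theorem rotDeriv_rotDeriv_add_eulerDeriv_eulerDeriv {g : ℝ × ℝ → ℝ}
    (hg : ContDiff ℝ (⊤ : ℕ∞) g) (p : ℝ × ℝ) :
    rotDeriv (rotDeriv g) p + eulerDeriv (eulerDeriv g) p = (p.1 ^ 2 + p.2 ^ 2) * lap g p := by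
  have hd (v) : Differentiable ℝ (pd v g) := (hg.pd v).differentiable (by simp)
  have hrot (v) : pd v (rotDeriv g) p =
      -p.2 * pd v (pd (1, 0) g) p - pd (1, 0) g p * v.2
        + (p.1 * pd v (pd (0, 1) g) p + pd (0, 1) g p * v.1) := by
    unfold rotDeriv
    rw [pd_add (differentiable_snd.fun_neg.fun_mul (hd _)) (differentiable_fst.fun_mul (hd _)),
      pd_mul differentiable_snd.fun_neg (hd _), pd_mul differentiable_fst (hd _), pd_neg_snd, pd_fst]
    ring
  have heul (v) : pd v (eulerDeriv g) p =
      p.1 * pd v (pd (1, 0) g) p + pd (1, 0) g p * v.1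
        + (p.2 * pd v (pd (0, 1) g) p + pd (0, 1) g p * v.2) := by
    unfold eulerDeriv
    rw [pd_add (differentiable_fst.fun_mul (hd _)) (differentiable_snd.fun_mul (hd _)),
      pd_mul differentiable_fst (hd _), pd_mul differentiable_snd (hd _), pd_fst, pd_snd]
  rw [rotDeriv, eulerDeriv, lap, hrot, hrot, heul, heul]
  ring

theorem lap_sq_mul {g : ℝ × ℝ → ℝ} (hg : ContDiff ℝ (⊤ : ℕ∞) g) (p : ℝ × ℝ) :
    lap (fun q => (q.1 ^ 2 + q.2 ^ 2) * g q) p =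
      (p.1 ^ 2 + p.2 ^ 2) * lap g p + 4 * eulerDeriv g p + 4 * g p := by
  have hg' : Differentiable ℝ g := hg.differentiable (by simp)
  have hd (v) : Differentiable ℝ (pd v g) := (hg.pd v).differentiable (by simp)
  have hsq : Differentiable ℝ (fun q : ℝ × ℝ => q.1 ^ 2 + q.2 ^ 2) := by fun_prop
  have hpsq (v q : ℝ × ℝ) :
      pd v (fun q => q.1 ^ 2 + q.2 ^ 2) q = (2 * v.1) * q.1 + (2 * v.2) * q.2 := by
    simp only [pow_two]
    rw [pd_add (differentiable_fst.fun_mul differentiable_fst)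
        (differentiable_snd.fun_mul differentiable_snd),
      pd_mul differentiable_fst differentiable_fst, pd_mul differentiable_snd differentiable_snd,
      pd_fst, pd_snd]
    ring
  have hlin (v : ℝ × ℝ) :
      Differentiable ℝ (fun q : ℝ × ℝ => (2 * v.1) * q.1 + (2 * v.2) * q.2) := by fun_prop
  have hplin (v : ℝ × ℝ) : pd v (fun q => (2 * v.1) * q.1 + (2 * v.2) * q.2) p =
      2 * v.1 ^ 2 + 2 * v.2 ^ 2 := by
    rw [pd_add (differentiable_fst.const_mul _) (differentiable_snd.const_mul _),
      pd_mul (differentiable_const _) differentiable_fst,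
      pd_mul (differentiable_const _) differentiable_snd, pd_fst, pd_snd]
    simp only [pd, fderiv_fun_const, Pi.zero_apply, zero_apply]
    ring
  have hfirst (v : ℝ × ℝ) : pd v (fun q => (q.1 ^ 2 + q.2 ^ 2) * g q) =
      fun q => (q.1 ^ 2 + q.2 ^ 2) * pd v g q
        + g q * ((2 * v.1) * q.1 + (2 * v.2) * q.2) := by
    funext q
    rw [pd_mul hsq hg', hpsq]
  have hsecond (v : ℝ × ℝ) : pd v (pd v (fun q => (q.1 ^ 2 + q.2 ^ 2) * g q)) p =
      (p.1 ^ 2 + p.2 ^ 2) * pd v (pd v g) p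
        + 2 * pd v g p * ((2 * v.1) * p.1 + (2 * v.2) * p.2)
        + g p * (2 * v.1 ^ 2 + 2 * v.2 ^ 2) := by
    rw [hfirst, pd_add (hsq.fun_mul (hd v)) (hg'.fun_mul (hlin v)), pd_mul hsq (hd v),
      pd_mul hg' (hlin v), hpsq, hplin]
    ring
  rw [lap, lap, hsecond, hsecond, eulerDeriv]
  ring

theorem hasDerivAt_polar_angle {g : ℝ × ℝ → ℝ} (hg : ContDiff ℝ (⊤ : ℕ∞) g) (t θ : ℝ) :
    HasDerivAt (fun θ => g (t * cos θ, t * sin θ)) (rotDeriv g (t * cos θ, t * sin θ)) θ := by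
  have hd : DifferentiableAt ℝ g (t * cos θ, t * sin θ) := hg.differentiable (by simp) _
  have hpath := ((hasDerivAt_cos θ).const_mul t).prodMk ((hasDerivAt_sin θ).const_mul t)
  refine (hd.hasFDerivAt.comp_hasDerivAt θ hpath).congr_deriv ?_
  rw [fderiv_apply_eq_pd, rotDeriv]
  ring

theorem hasDerivAt_polar_radius {g : ℝ × ℝ → ℝ} (hg : ContDiff ℝ (⊤ : ℕ∞) g) (t θ : ℝ) :
    HasDerivAt (fun t => t * g (t * cos θ, t * sin θ))
      (g (t * cos θ, t * sin θ) + eulerDeriv g (t * cos θ, t * sin θ)) t := by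
  have hd : DifferentiableAt ℝ g (t * cos θ, t * sin θ) := hg.differentiable (by simp) _
  have hpath := ((hasDerivAt_id t).mul_const (cos θ)).prodMk
    ((hasDerivAt_id t).mul_const (sin θ))
  have hcomp : HasDerivAt (fun t => g (t * cos θ, t * sin θ)) _ t :=
    hd.hasFDerivAt.comp_hasDerivAt t hpath
  refine ((hasDerivAt_id t).mul hcomp).congr_deriv ?_
  rw [fderiv_apply_eq_pd, eulerDeriv]
  simp only [id]
  ring

/-- A compactly supported function vanishes on every line through the origin at parameters
outside an interval that does not depend on the line. -/
theorem HasCompactSupport.exists_polar_eq_zero {g : ℝ × ℝ → ℝ} (hg : HasCompactSupport g) :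
    ∃ M : ℝ, ∀ t θ : ℝ, t ∉ Set.Icc (-M) M → g (t * cos θ, t * sin θ) = 0 := by
  obtain ⟨R, hR⟩ := hg.isCompact.isBounded.exists_norm_le
  refine ⟨2 * R, fun t θ ht => ?_⟩
  by_contra hne
  have hle := hR _ (subset_tsupport g hne)
  rw [Prod.norm_mk, max_le_iff, Real.norm_eq_abs, Real.norm_eq_abs] at hle
  have hc := sq_le_sq' (neg_le_of_abs_le hle.1) (le_of_abs_le hle.1)
  have hs := sq_le_sq' (neg_le_of_abs_le hle.2) (le_of_abs_le hle.2)
  have hR0 : 0 ≤ R := (abs_nonneg _).trans hle.1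
  refine ht (abs_le.1 (abs_le_of_sq_le_sq ?_ (by positivity)))
  nlinarith [sin_sq_add_cos_sq θ, sq_nonneg R]

theorem integrable_polar {g : ℝ × ℝ → ℝ} (hg : Continuous g) (hgs : HasCompactSupport g) (θ : ℝ) :
    Integrable (fun t : ℝ => g (t * cos θ, t * sin θ)) := by
  obtain ⟨M, hM⟩ := hgs.exists_polar_eq_zero
  exact (hg.comp (by fun_prop)).integrable_of_hasCompactSupport
    (HasCompactSupport.intro isCompact_Icc fun t ht => hM t θ ht)

theorem xray_zero (g : ℝ × ℝ → ℝ) (θ : ℝ) :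
    xray g 0 θ = ∫ t : ℝ, g (t * cos θ, t * sin θ) := by
  simp [xray]

theorem hasDerivAt_xray_zero {g : ℝ × ℝ → ℝ} (hg : ContDiff ℝ (⊤ : ℕ∞) g)
    (hgs : HasCompactSupport g) (θ : ℝ) :
    HasDerivAt (fun θ => xray g 0 θ) (xray (rotDeriv g) 0 θ) θ := by
  simp only [xray_zero]
  obtain ⟨M, hM⟩ := hgs.rotDeriv.exists_polar_eq_zero
  obtain ⟨C, hC⟩ := hgs.rotDeriv.exists_bound_of_continuous hg.rotDeriv.continuous
  refine (hasDerivAt_integral_of_dominated_loc_of_deriv_le (s := Set.univ)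
    (bound := (Set.Icc (-M) M).indicator fun _ => C) Filter.univ_mem
    (.of_forall fun θ => (integrable_polar hg.continuous hgs θ).aestronglyMeasurable)
    (integrable_polar hg.continuous hgs θ)
    (integrable_polar hg.rotDeriv.continuous hgs.rotDeriv θ).aestronglyMeasurable
    (.of_forall fun t θ' _ => ?_) ?_
    (.of_forall fun t θ' _ => hasDerivAt_polar_angle hg t θ')).2
  · by_cases ht : t ∈ Set.Icc (-M) M
    · simpa only [Set.indicator_of_mem ht] using hC _
    · simp only [Set.indicator_of_notMem ht, hM t θ' ht, norm_zero, le_refl]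
  · exact (integrable_indicator_iff measurableSet_Icc).2
      (integrableOn_const isCompact_Icc.measure_lt_top.ne)

theorem xray_eulerDeriv_zero {g : ℝ × ℝ → ℝ} (hg : ContDiff ℝ (⊤ : ℕ∞) g)
    (hgs : HasCompactSupport g) (θ : ℝ) :
    xray (eulerDeriv g) 0 θ = -xray g 0 θ := by
  have hint := integrable_polar hg.continuous hgs θ
  have hint' := integrable_polar hg.eulerDeriv.continuous hgs.eulerDeriv θ
  obtain ⟨M, hM⟩ := hgs.exists_polar_eq_zero
  have hprim : Integrable (fun t : ℝ => t * g (t * cos θ, t * sin θ)) :=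
    (continuous_id.mul (hg.continuous.comp (by fun_prop))).integrable_of_hasCompactSupport
      (HasCompactSupport.intro (K := Set.Icc (-M) M) isCompact_Icc fun t ht => by
        simp only [Pi.mul_apply, Function.comp_apply, hM t θ ht, mul_zero])
  have hzero := integral_eq_zero_of_hasDerivAt_of_integrable
    (fun t => hasDerivAt_polar_radius hg t θ) (hint.add hint') hprim
  rw [integral_add hint hint'] at hzero
  rw [xray_zero, xray_zero]
  linarith

theorem contDiff_invSq {ψ : ℝ × ℝ → ℝ} (hψ : ContDiff ℝ (⊤ : ℕ∞) ψ) (h0 : (0, 0) ∉ tsupport ψ) :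
    ContDiff ℝ (⊤ : ℕ∞) (invSq ψ) := by
  rw [contDiff_iff_contDiffAt]
  intro p
  by_cases hp : p ∈ tsupport ψ
  · have hne : p.1 ^ 2 + p.2 ^ 2 ≠ 0 := by
      intro h
      have h1 : p.1 = 0 := by nlinarith [sq_nonneg p.1, sq_nonneg p.2]
      have h2 : p.2 = 0 := by nlinarith [sq_nonneg p.1, sq_nonneg p.2]
      exact h0 (by rwa [show p = (0, 0) from Prod.ext h1 h2] at hp)
    have hsq : ContDiffAt ℝ (⊤ : ℕ∞) (fun q : ℝ × ℝ => q.1 ^ 2 + q.2 ^ 2) p := by fun_prop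
    exact (hsq.inv hne).mul hψ.contDiffAt
  · refine (contDiffAt_const (c := (0 : ℝ))).congr_of_eventuallyEq ?_
    filter_upwards [notMem_tsupport_iff_eventuallyEq.1 hp] with q hq
    simp [invSq, hq]

theorem sq_mul_invSq {ψ : ℝ × ℝ → ℝ} (h0 : (0, 0) ∉ tsupport ψ) :
    (fun p => (p.1 ^ 2 + p.2 ^ 2) * invSq ψ p) = ψ := by
  funext p
  by_cases hp : p.1 ^ 2 + p.2 ^ 2 = 0
  · have h1 : p.1 = 0 := by nlinarith [sq_nonneg p.1, sq_nonneg p.2]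
    have h2 : p.2 = 0 := by nlinarith [sq_nonneg p.1, sq_nonneg p.2]
    rw [hp, zero_mul, show p = (0, 0) from Prod.ext h1 h2, image_eq_zero_of_notMem_tsupport h0]
  · rw [invSq, mul_inv_cancel_left₀ hp]

/-- For `ψ ∈ C_c^∞(ℝ² \ {0})` one has `T(Δψ)(0,θ) = (∂_θ² + 1) T(|x|⁻²ψ)(0,θ)`. -/
theorem xray_lap_eq (ψ : ℝ × ℝ → ℝ) (hψ : ContDiff ℝ (⊤ : ℕ∞) ψ) (hsupp : HasCompactSupport ψ)
    (h0 : (0, 0) ∉ tsupport ψ) (θ : ℝ) :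
    xray (lap ψ) 0 θ =
      deriv (deriv (fun θ' => xray (invSq ψ) 0 θ')) θ + xray (invSq ψ) 0 θ := by
  have hφ : ContDiff ℝ (⊤ : ℕ∞) (invSq ψ) := contDiff_invSq hψ h0
  have hφs : HasCompactSupport (invSq ψ) := hsupp.mul_left
  have hlap (p : ℝ × ℝ) : lap ψ p = rotDeriv (rotDeriv (invSq ψ)) p
      + eulerDeriv (eulerDeriv (invSq ψ)) p + 4 * eulerDeriv (invSq ψ) p + 4 * invSq ψ p := by
    rw [rotDeriv_rotDeriv_add_eulerDeriv_eulerDeriv hφ, ← lap_sq_mul hφ, sq_mul_invSq h0]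
  have hderiv : deriv (fun θ' => xray (invSq ψ) 0 θ') =
      fun θ' => xray (rotDeriv (invSq ψ)) 0 θ' :=
    funext fun θ' => (hasDerivAt_xray_zero hφ hφs θ').deriv
  rw [hderiv, (hasDerivAt_xray_zero hφ.rotDeriv hφs.rotDeriv θ).deriv]
  have hrot := integrable_polar hφ.rotDeriv.rotDeriv.continuous hφs.rotDeriv.rotDeriv θ
  have heul := integrable_polar hφ.eulerDeriv.eulerDeriv.continuous hφs.eulerDeriv.eulerDeriv θ
  have heul' := (integrable_polar hφ.eulerDeriv.continuous hφs.eulerDeriv θ).const_mul 4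
  have hself := (integrable_polar hφ.continuous hφs θ).const_mul 4
  have hsum : xray (lap ψ) 0 θ = xray (rotDeriv (rotDeriv (invSq ψ))) 0 θ
      + xray (eulerDeriv (eulerDeriv (invSq ψ))) 0 θ + 4 * xray (eulerDeriv (invSq ψ)) 0 θ
      + 4 * xray (invSq ψ) 0 θ := by
    simp only [xray_zero, hlap]
    rw [integral_add ((hrot.fun_add heul).fun_add heul') hself, integral_add (hrot.fun_add heul) heul',
      integral_add hrot heul, integral_const_mul, integral_const_mul]
  rw [hsum, xray_eulerDeriv_zero hφ.eulerDeriv hφs.eulerDeriv, xray_eulerDeriv_zero hφ hφs]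
  ring

end
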